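/- (Linear brane normal form) Let 𝕀 be a linear generalized complex structure on 𝕍 = V ⊕ V*, and let (S, τ) be a linear rank-0 brane: S ⊆ V a subspace with dim_ℝ S even, and τ ⊆ 𝕍 a maximal isotropic, 𝕀-invariant subspace with a(τ) = S. Then there exists an isotropic, 𝕀-invariant subspace U ⊆ 𝕍 complementary to V* (i.e., 𝕍 = U ⊕ V*) such that τ = (U ∩ τ) ⊕ (τ ∩ V*); consequently, writing 𝕀 in the splitting 𝕍 = U ⊕ V*, it takes the form (−I, P; 0, I*) with I a complex structure on V ≅ U for which S is a complex subspace, and τ ≅ S ⊕ Ann(S). -/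

import Mathlib

/- STATEMENT 10 (Linear brane normal form): Given a linear generalized complex
   structure 𝕀 on 𝕍 = V ⊕ V* and a linear rank-0 brane (S, τ) with dim S even,
   there is an isotropic, 𝕀-invariant subspace U complementary to V* with
   τ = (U ∩ τ) ⊕ (τ ∩ V*); in the splitting 𝕍 = U ⊕ V*, 𝕀 is upper-triangular
   with a complex structure I on V ≅ U for which S is a complex subspace
   (𝕀 preserves U ∩ τ and projects it onto S), and τ ≅ s(S) ⊕ Ann(S). -/

variable {V : Type*} [AddCommGroup V] [Module ℝ V] [FiniteDimensional ℝ V]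

noncomputable def gpair (u v : V × Module.Dual ℝ V) : ℝ := (u.2 v.1 + v.2 u.1) / 2

/-- V* ⊂ V ⊕ V*, as the kernel of the anchor projection. -/
def dualSub (V : Type*) [AddCommGroup V] [Module ℝ V] :
    Submodule ℝ (V × Module.Dual ℝ V) :=
  LinearMap.ker (LinearMap.fst ℝ V (Module.Dual ℝ V))

/-!
Since `-1` is not a square, an endomorphism `J` with `J * J = -1` exists precisely in even
dimension, and a subspace `A` has a `J`-invariant complement as soon as `dim A` is even: split off
its largest `J`-invariant subspace, choose a complex structure `L` on the rest `R`, and use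
`{J r - L r | r ∈ R}`.

As `τ` and `S` are even-dimensional, so is `τ ⊓ V*`; let `C` be a `J`-invariant complement of it in
`τ`. The Lagrangian `τ` has a `J`-invariant Lagrangian complement `W`, obtained by averaging the
projections onto `τ` along an invariant complement and along the orthogonal of that complement.
Replacing `W` by its reduction `U = C ⊔ (W ⊓ Cᗮ)` keeps it Lagrangian and gives `U ⊓ τ = C`, while
`U ⊓ V*` is orthogonal to `C ⊔ (τ ⊓ V*) = τ`, so it lies in `τ`, hence in `C ⊓ V* = ⊥`.
-/

open Module

section LinearMap

variable {K E F : Type*} [Field K] [AddCommGroup E] [Module K E] [AddCommGroup F] [Module K F]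

theorem finrank_map_add_finrank_inf_ker (f : E →ₗ[K] F) (T : Submodule K E)
    [FiniteDimensional K T] :
    finrank K (T.map f) + finrank K ↥(T ⊓ LinearMap.ker f) = finrank K T := by
  rw [← LinearMap.finrank_range_add_finrank_ker (f ∘ₗ T.subtype), LinearMap.range_comp,
    Submodule.range_subtype, LinearMap.ker_comp, ← Submodule.map_comap_subtype,
    Submodule.finrank_map_subtype_eq]

theorem map_eq_of_sup_inf_ker_eq {f : E →ₗ[K] F} {A T : Submodule K E}
    (h : A ⊔ (T ⊓ LinearMap.ker f) = T) : A.map f = T.map f := by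
  conv_rhs => rw [← h, Submodule.map_sup, LinearMap.le_ker_iff_map.mp inf_le_right, sup_bot_eq]

end LinearMap

section ComplexStructure

variable {K E F : Type*} [Field K] [AddCommGroup E] [Module K E] [AddCommGroup F] [Module K F]
  {J : End K E}

theorem neZero_two_of_not_isSquare_neg_one (hK : ¬IsSquare (-1 : K)) : NeZero (2 : K) := by
  refine ⟨fun h2 => hK ⟨1, ?_⟩⟩
  linear_combination -h2

theorem apply_apply_of_mul_self_eq_neg_one (hJ : J * J = -1) (x : E) : J (J x) = -x :=
  LinearMap.congr_fun hJ x

theorem isSemisimple_of_mul_self_eq_neg_one [NeZero (2 : K)] (hJ : J * J = -1) :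
    J.IsSemisimple := by
  have hsep : (Polynomial.X ^ 2 - Polynomial.C (-1 : K)).Separable :=
    Polynomial.separable_X_pow_sub_C _ (by exact_mod_cast two_ne_zero) (by simp)
  exact End.isSemisimple_of_squarefree_aeval_eq_zero hsep.squarefree (by simp [sq, hJ])

theorem even_finrank_of_mul_self_eq_neg_one (hK : ¬IsSquare (-1 : K)) (hJ : J * J = -1) :
    Even (finrank K E) := by
  by_contra hodd
  have hdet : LinearMap.det J * LinearMap.det J = -1 := by
    rw [← map_mul, hJ, ← neg_one_smul K, LinearMap.det_smul, map_one,
      (Nat.not_even_iff_odd.mp hodd).neg_one_pow, mul_one]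
  exact hK ⟨_, hdet.symm⟩

theorem even_finrank_of_mem_invtSubmodule (hK : ¬IsSquare (-1 : K)) (hJ : J * J = -1)
    {T : Submodule K E} (hT : T ∈ J.invtSubmodule) : Even (finrank K T) := by
  refine even_finrank_of_mul_self_eq_neg_one (J := J.restrict hT) hK ?_
  ext x
  exact apply_apply_of_mul_self_eq_neg_one hJ x

theorem exists_mul_self_eq_neg_one_of_even_finrank [FiniteDimensional K E]
    (hE : Even (finrank K E)) : ∃ L : End K E, L * L = -1 := by
  obtain ⟨m, hm⟩ := hE
  let e : E ≃ₗ[K] (Fin m → K) × (Fin m → K) := LinearEquiv.ofFinrankEq _ _ (by simp [hm])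
  let rot : End K ((Fin m → K) × (Fin m → K)) :=
    (-LinearMap.snd K _ _).prod (LinearMap.fst K _ _)
  have hrot : rot * rot = -1 := by ext <;> simp [rot]
  refine ⟨e.symm.conj rot, ?_⟩
  rw [End.mul_eq_comp, ← LinearEquiv.conj_comp, ← End.mul_eq_comp, hrot, map_neg, End.one_eq_id,
    LinearEquiv.conj_id]
  rfl

theorem inf_comap_mem_invtSubmodule (hJ : J * J = -1) (A : Submodule K E) :
    A ⊓ A.comap J ∈ J.invtSubmodule := fun x hx =>
  ⟨hx.2, by simpa [apply_apply_of_mul_self_eq_neg_one hJ] using hx.1⟩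

theorem sup_map_mem_invtSubmodule (hJ : J * J = -1) (A : Submodule K E) :
    A ⊔ A.map J ∈ J.invtSubmodule := by
  rw [End.mem_invtSubmodule_iff_map_le, Submodule.map_sup, ← Submodule.map_comp,
    ← End.mul_eq_comp, hJ, Submodule.map_neg,
    End.one_eq_id, Submodule.map_id, sup_comm]

theorem range_comp_sub_comp_mem_invtSubmodule (hJ : J * J = -1) {L : End K F} (hL : L * L = -1)
    (f : F →ₗ[K] E) : LinearMap.range (J ∘ₗ f - f ∘ₗ L) ∈ J.invtSubmodule := by
  rintro _ ⟨x, rfl⟩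
  refine ⟨-L x, ?_⟩
  simp only [LinearMap.sub_apply, LinearMap.comp_apply, map_neg, map_sub,
    apply_apply_of_mul_self_eq_neg_one hJ, apply_apply_of_mul_self_eq_neg_one hL]
  abel

theorem exists_disjoint_inf_comap_sup_eq_even_finrank (hK : ¬IsSquare (-1 : K))
    (hJ : J * J = -1) {A : Submodule K E} [FiniteDimensional K A] (hA : Even (finrank K A)) :
    ∃ R : Submodule K E, Disjoint (A ⊓ A.comap J) R ∧ (A ⊓ A.comap J) ⊔ R = A ∧
      Even (finrank K R) := by
  obtain ⟨R, hdisj, hsup⟩ := IsModularLattice.exists_disjoint_and_sup_eq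
    (inf_le_left : A ⊓ A.comap J ≤ A)
  refine ⟨R, hdisj, hsup, ?_⟩
  have : FiniteDimensional K R := Submodule.finiteDimensional_of_le (hsup ▸ le_sup_right : R ≤ A)
  have hfinrank := Submodule.finrank_sup_add_finrank_inf_eq (A ⊓ A.comap J) R
  rw [hsup, hdisj.eq_bot, finrank_bot, add_zero] at hfinrank
  rw [hfinrank, Nat.even_add] at hA
  exact hA.mp (even_finrank_of_mem_invtSubmodule hK hJ (inf_comap_mem_invtSubmodule hJ A))

theorem exists_mem_invtSubmodule_disjoint_sup_eq_sup_map (hK : ¬IsSquare (-1 : K))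
    (hJ : J * J = -1) {A : Submodule K E} [FiniteDimensional K A] (hA : Even (finrank K A)) :
    ∃ C ∈ J.invtSubmodule, Disjoint A C ∧ A ⊔ C = A ⊔ A.map J := by
  obtain ⟨R, hdisj, hsup, hR⟩ := exists_disjoint_inf_comap_sup_eq_even_finrank hK hJ hA
  have hRA : R ≤ A := hsup ▸ le_sup_right
  have : FiniteDimensional K R := Submodule.finiteDimensional_of_le hRA
  obtain ⟨L, hL⟩ := exists_mul_self_eq_neg_one_of_even_finrank hR
  refine ⟨LinearMap.range (J ∘ₗ R.subtype - R.subtype ∘ₗ L),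
    range_comp_sub_comp_mem_invtSubmodule hJ hL _, ?_, le_antisymm ?_ ?_⟩
  · rw [Submodule.disjoint_def]
    rintro _ hxA ⟨r, rfl⟩
    have hJr : J r ∈ A := by simpa using A.add_mem hxA (hRA (L r).2)
    have hr : r = 0 := Subtype.ext (Submodule.disjoint_def.mp hdisj r ⟨hRA r.2, hJr⟩ r.2)
    rw [hr, map_zero]
  · refine sup_le le_sup_left ?_
    rintro _ ⟨r, rfl⟩
    exact Submodule.sub_mem _ (Submodule.mem_sup_right ⟨r, hRA r.2, rfl⟩)
      (Submodule.mem_sup_left (hRA (L r).2))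
  · refine sup_le le_sup_left ?_
    conv_lhs => rw [← hsup, Submodule.map_sup]
    refine sup_le ((Submodule.map_le_iff_le_comap.mpr inf_le_right).trans le_sup_left) ?_
    rintro _ ⟨r, hr, rfl⟩
    rw [← add_sub_cancel (L ⟨r, hr⟩ : E) (J r)]
    exact Submodule.add_mem_sup (hRA (L ⟨r, hr⟩).2) ⟨⟨r, hr⟩, rfl⟩

theorem exists_mem_invtSubmodule_isCompl_of_even_finrank (hK : ¬IsSquare (-1 : K))
    (hJ : J * J = -1) {A : Submodule K E} [FiniteDimensional K A] (hA : Even (finrank K A)) :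
    ∃ C ∈ J.invtSubmodule, IsCompl A C := by
  have := neZero_two_of_not_isSquare_neg_one hK
  obtain ⟨C, hCJ, hdisj, hsup⟩ := exists_mem_invtSubmodule_disjoint_sup_eq_sup_map hK hJ hA
  obtain ⟨N, hNJ, hN⟩ := End.isSemisimple_iff.mp (isSemisimple_of_mul_self_eq_neg_one hJ) _
    (sup_map_mem_invtSubmodule hJ A)
  exact ⟨C ⊔ N, End.invtSubmodule.sup_mem hCJ hNJ,
    hdisj.isCompl_sup_right_of_isCompl_sup_left (hsup ▸ hN)⟩

end ComplexStructure

section Lagrangian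

variable {K E : Type*} [Field K] [AddCommGroup E] [Module K E]
  {B : LinearMap.BilinForm K E} {L M T D W C : Submodule K E} {J : End K E}

/-- A Lagrangian subspace, encoded as one that equals its own orthogonal. For a nondegenerate form
in finite dimension these are the isotropic subspaces of half the dimension, see
`isLagrangian_of_isotropic`. -/
def IsLagrangian (B : LinearMap.BilinForm K E) (L : Submodule K E) : Prop :=
  B.orthogonal L = L

theorem IsLagrangian.apply_eq_zero (hL : IsLagrangian B L) {x y : E} (hx : x ∈ L) (hy : y ∈ L) :
    B x y = 0 :=
  hL.ge hy x hx

theorem isLagrangian_of_isotropic [FiniteDimensional K E] (hB : B.Nondegenerate)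
    (hiso : ∀ x ∈ L, ∀ y ∈ L, B x y = 0) (hL : finrank K E = finrank K L + finrank K L) :
    IsLagrangian B L := by
  have hle : L ≤ B.orthogonal L := fun y hy x hx => hiso x hx y hy
  refine (Submodule.eq_of_le_of_finrank_eq hle ?_).symm
  rw [LinearMap.BilinForm.finrank_orthogonal hB, hL, Nat.add_sub_cancel]

theorem orthogonal_sup (B : LinearMap.BilinForm K E) (L M : Submodule K E) :
    B.orthogonal (L ⊔ M) = B.orthogonal L ⊓ B.orthogonal M := by
  refine le_antisymm (le_inf (LinearMap.BilinForm.orthogonal_le le_sup_left)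
    (LinearMap.BilinForm.orthogonal_le le_sup_right)) fun x hx y hy => ?_
  obtain ⟨l, hl, m, hm, rfl⟩ := Submodule.mem_sup.mp hy
  rw [map_add, LinearMap.add_apply, hx.1 l hl, hx.2 m hm, add_zero]

theorem orthogonal_inf [FiniteDimensional K E] (hB : B.Nondegenerate) (hrefl : B.IsRefl)
    (L M : Submodule K E) : B.orthogonal (L ⊓ M) = B.orthogonal L ⊔ B.orthogonal M := by
  rw [← LinearMap.BilinForm.orthogonal_orthogonal hB hrefl (B.orthogonal L ⊔ B.orthogonal M),
    orthogonal_sup, LinearMap.BilinForm.orthogonal_orthogonal hB hrefl,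
    LinearMap.BilinForm.orthogonal_orthogonal hB hrefl]

theorem isCompl_orthogonal_orthogonal [FiniteDimensional K E] (hB : B.Nondegenerate)
    (hrefl : B.IsRefl) (h : IsCompl L M) : IsCompl (B.orthogonal L) (B.orthogonal M) := by
  rw [isCompl_iff, disjoint_iff, codisjoint_iff, ← orthogonal_sup, ← orthogonal_inf hB hrefl,
    h.sup_eq_top, h.inf_eq_bot, LinearMap.BilinForm.orthogonal_top_eq_bot hB]
  exact ⟨rfl, LinearMap.BilinForm.orthogonal_bot⟩

theorem orthogonal_mem_invtSubmodule (hskew : B.IsSkewAdjoint J) (hC : C ∈ J.invtSubmodule) :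
    B.orthogonal C ∈ J.invtSubmodule := fun x hx y hy => by
  have h : B (J y) x = B y (-J x) := hskew y x
  rw [map_neg, hx _ (hC hy), zero_eq_neg] at h
  exact h

theorem isSkewAdjoint_of_isOrthogonal (hJ : J * J = -1) (horth : B.IsOrthogonal J) :
    B.IsSkewAdjoint J := fun x y => by
  rw [← horth x, Pi.neg_apply, map_neg, apply_apply_of_mul_self_eq_neg_one hJ, neg_neg]

namespace IsLagrangian

theorem isCompl_of_disjoint [FiniteDimensional K E] (hB : B.Nondegenerate) (hrefl : B.IsRefl)
    (hL : IsLagrangian B L) (hM : IsLagrangian B M) (h : Disjoint L M) : IsCompl L M := by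
  refine ⟨h, codisjoint_iff.mpr ?_⟩
  rw [← hL, ← hM, ← orthogonal_inf hB hrefl, h.eq_bot, LinearMap.BilinForm.orthogonal_bot]

theorem of_isCompl [FiniteDimensional K E] (hB : B.Nondegenerate) (hrefl : B.IsRefl)
    (hL : IsLagrangian B L) (hLM : IsCompl L M) (hM : M ≤ B.orthogonal M) : IsLagrangian B M := by
  have hLM' : IsCompl L (B.orthogonal M) := hL ▸ isCompl_orthogonal_orthogonal hB hrefl hLM
  refine (eq_of_le_of_inf_le_of_sup_le (z := L) hM ?_ ?_).symm
  · simp [hLM'.symm.inf_eq_bot]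
  · simp [hLM.symm.sup_eq_top]

theorem sup_inf_orthogonal [FiniteDimensional K E] (hB : B.Nondegenerate) (hrefl : B.IsRefl)
    (hL : IsLagrangian B L) (hC : C ≤ B.orthogonal C) :
    IsLagrangian B (C ⊔ (L ⊓ B.orthogonal C)) := by
  rw [IsLagrangian, orthogonal_sup, orthogonal_inf hB hrefl, hL,
    LinearMap.BilinForm.orthogonal_orthogonal hB hrefl, inf_comm, sup_comm L,
    sup_inf_assoc_of_le _ hC]

theorem apply_projection_add_apply_projection_orthogonal (hT : IsLagrangian B T)
    (hW : IsCompl T W) (hW' : IsCompl T (B.orthogonal W)) (x y : E) :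
    B (T.projection W hW x) y + B x (T.projection (B.orthogonal W) hW' y) = B x y := by
  set p := T.projection W hW x
  set p' := T.projection (B.orthogonal W) hW' y
  have hpp' : B p p' = 0 := hT.apply_eq_zero (Submodule.projection_apply_mem hW x)
    (Submodule.projection_apply_mem hW' y)
  have hcompl : B (x - p) (y - p') = 0 :=
    Submodule.sub_projection_mem hW' y _ (Submodule.sub_projection_mem hW x)
  simp only [map_sub, LinearMap.sub_apply, hpp'] at hcompl
  linear_combination -hcompl

end IsLagrangian

theorem ker_le_orthogonal_ker_of_apply_add_apply_eq {q : End K E}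
    (hq : ∀ x y, B (q x) y + B x (q y) = B x y) :
    LinearMap.ker q ≤ B.orthogonal (LinearMap.ker q) := fun y hy x hx => by
  rw [← hq x y, LinearMap.mem_ker.mp hx, LinearMap.mem_ker.mp hy, map_zero, map_zero,
    LinearMap.zero_apply, add_zero]

theorem isProj_average [NeZero (2 : K)] {p q : End K E} (hp : LinearMap.IsProj T p)
    (hq : LinearMap.IsProj T q) : LinearMap.IsProj T ((2⁻¹ : K) • (p + q)) where
  map_mem x := T.smul_mem _ (T.add_mem (hp.map_mem x) (hq.map_mem x))
  map_id x hx := by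
    rw [LinearMap.smul_apply, LinearMap.add_apply, hp.map_id x hx, hq.map_id x hx, ← two_smul K x,
      inv_smul_smul₀ two_ne_zero]

theorem isProj_projection (h : IsCompl T W) : LinearMap.IsProj T (T.projection W h) where
  map_mem := Submodule.projection_apply_mem h
  map_id _ := Submodule.projection_apply_of_mem_left h

theorem commute_projection (hT : T ∈ J.invtSubmodule) (hW : W ∈ J.invtSubmodule)
    (h : IsCompl T W) : Commute (T.projection W h) J := by
  rw [LinearMap.IsIdempotentElem.commute_iff (isProj_projection h).isIdempotentElem,
    Submodule.range_projection, Submodule.ker_projection]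
  exact ⟨hT, hW⟩

theorem ker_mem_invtSubmodule_of_commute {q : End K E} (h : Commute q J) :
    LinearMap.ker q ∈ J.invtSubmodule := fun x hx => by
  have hcomm : q (J x) = J (q x) := LinearMap.congr_fun h.eq x
  rw [Submodule.mem_comap, LinearMap.mem_ker, hcomm, LinearMap.mem_ker.mp hx, map_zero]

namespace IsLagrangian

theorem exists_isLagrangian_mem_invtSubmodule_isCompl [NeZero (2 : K)] [FiniteDimensional K E]
    (hB : B.Nondegenerate) (hsymm : B.IsSymm) (hJ : J * J = -1) (hskew : B.IsSkewAdjoint J)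
    (hT : IsLagrangian B T) (hTJ : T ∈ J.invtSubmodule) :
    ∃ W ∈ J.invtSubmodule, IsLagrangian B W ∧ IsCompl T W := by
  obtain ⟨W, hWJ, hW⟩ := End.isSemisimple_iff.mp (isSemisimple_of_mul_self_eq_neg_one hJ) T hTJ
  have hW' : IsCompl T (B.orthogonal W) :=
    hT ▸ isCompl_orthogonal_orthogonal hB hsymm.isRefl hW
  set p := T.projection W hW
  set p' := T.projection (B.orthogonal W) hW'
  set q : End K E := (2⁻¹ : K) • (p + p') with hq
  have hTq : IsCompl T (LinearMap.ker q) :=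
    (isProj_average (isProj_projection hW) (isProj_projection hW')).isCompl
  have hqJ : Commute q J := ((commute_projection hTJ hWJ hW).add_left
    (commute_projection hTJ (orthogonal_mem_invtSubmodule hskew hWJ) hW')).smul_left _
  -- `p'` is adjoint to `1 - p`, so the adjoint of `q` is `1 - q`.
  have hqB (x y : E) : B (q x) y + B x (q y) = B x y := by
    have hxy := apply_projection_add_apply_projection_orthogonal hT hW hW' x y
    have hyx := apply_projection_add_apply_projection_orthogonal hT hW hW' y x
    rw [hsymm.eq (p y), hsymm.eq y, hsymm.eq y] at hyx
    simp only [hq, LinearMap.smul_apply, LinearMap.add_apply, map_smul, map_add, smul_eq_mul]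
    field_simp
    linear_combination hxy + hyx
  exact ⟨LinearMap.ker q, ker_mem_invtSubmodule_of_commute hqJ,
    hT.of_isCompl hB hsymm.isRefl hTq (ker_le_orthogonal_ker_of_apply_add_apply_eq hqB), hTq⟩

theorem le_orthogonal_of_le (hT : IsLagrangian B T) (hC : C ≤ T) : C ≤ B.orthogonal C :=
  fun _ hy _ hx => hT.apply_eq_zero (hC hx) (hC hy)

theorem disjoint_sup_inf_orthogonal (hT : IsLagrangian B T) (hD : IsLagrangian B D)
    (hdisj : Disjoint (T ⊓ D) C) (hsup : (T ⊓ D) ⊔ C = T) (hTW : Disjoint T W) :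
    Disjoint (C ⊔ (W ⊓ B.orthogonal C)) D := by
  have hCT : C ≤ T := hsup ▸ le_sup_right
  set U := C ⊔ (W ⊓ B.orthogonal C)
  have hUC : U ≤ B.orthogonal C := sup_le (hT.le_orthogonal_of_le hCT) inf_le_right
  have hDT : D ≤ B.orthogonal (T ⊓ D) :=
    hD.ge.trans (LinearMap.BilinForm.orthogonal_le inf_le_right)
  have hUDT : U ⊓ D ≤ T := by
    rw [← hT, ← hsup, orthogonal_sup]
    exact le_inf (inf_le_right.trans hDT) (inf_le_left.trans hUC)
  have hUT : U ⊓ T = C := by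
    rw [sup_inf_assoc_of_le _ hCT, (hTW.symm.mono_left inf_le_left).eq_bot, sup_bot_eq]
  rw [disjoint_iff_inf_le, ← hdisj.eq_bot]
  exact le_inf (le_inf hUDT inf_le_right) (hUT ▸ le_inf inf_le_left hUDT)

end IsLagrangian

theorem exists_isLagrangian_isCompl_inf_sup_inf_eq [FiniteDimensional K E]
    (hK : ¬IsSquare (-1 : K)) (hB : B.Nondegenerate) (hsymm : B.IsSymm) (hJ : J * J = -1)
    (hskew : B.IsSkewAdjoint J) (hT : IsLagrangian B T) (hTJ : T ∈ J.invtSubmodule)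
    (hD : IsLagrangian B D) (hTD : Even (finrank K ↥(T ⊓ D))) :
    ∃ U ∈ J.invtSubmodule, IsLagrangian B U ∧ IsCompl U D ∧ (U ⊓ T) ⊔ (T ⊓ D) = T := by
  have := neZero_two_of_not_isSquare_neg_one hK
  obtain ⟨N, hNJ, hN⟩ := exists_mem_invtSubmodule_isCompl_of_even_finrank hK hJ hTD
  obtain ⟨W, hWJ, hW, hTW⟩ :=
    hT.exists_isLagrangian_mem_invtSubmodule_isCompl hB hsymm hJ hskew hTJ
  set C := N ⊓ T
  have hCJ : C ∈ J.invtSubmodule := End.invtSubmodule.inf_mem hNJ hTJ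
  have hdisj : Disjoint (T ⊓ D) C := hN.disjoint.mono_right inf_le_left
  have hsup : (T ⊓ D) ⊔ C = T := by
    rw [← sup_inf_assoc_of_le _ inf_le_left, hN.sup_eq_top, top_inf_eq]
  set U := C ⊔ (W ⊓ B.orthogonal C)
  have hU : IsLagrangian B U :=
    hW.sup_inf_orthogonal hB hsymm.isRefl (hT.le_orthogonal_of_le inf_le_right)
  refine ⟨U, End.invtSubmodule.sup_mem hCJ (End.invtSubmodule.inf_mem hWJ
    (orthogonal_mem_invtSubmodule hskew hCJ)), hU, hU.isCompl_of_disjoint hB hsymm.isRefl hD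
    (hT.disjoint_sup_inf_orthogonal hD hdisj hsup hTW.disjoint), ?_⟩
  refine le_antisymm (sup_le inf_le_right inf_le_left) ?_
  calc T = C ⊔ (T ⊓ D) := by rw [sup_comm, hsup]
    _ ≤ (U ⊓ T) ⊔ (T ⊓ D) := sup_le_sup_right (le_inf le_sup_left inf_le_right) _

end Lagrangian

section CanonicalPairing

variable {K X : Type*} [Field K] [AddCommGroup X] [Module K X]

variable (K X) in
/-- The canonical symmetric pairing `⟨x + ξ, y + η⟩ = ξ y + η x` on `X ⊕ X*`, without the usual
factor `1 / 2`. It is Mathlib's `LinearMap.dualProd` with the two summands exchanged. -/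
def canonicalPairing : LinearMap.BilinForm K (X × Dual K X) :=
  LinearMap.BilinForm.congr (LinearEquiv.prodComm K (Dual K X) X) (LinearMap.dualProd K X)

theorem canonicalPairing_apply (u v : X × Dual K X) :
    canonicalPairing K X u v = u.2 v.1 + v.2 u.1 := by
  simp [canonicalPairing, add_comm]

theorem canonicalPairing_isSymm : (canonicalPairing K X).IsSymm :=
  ⟨fun u v => by simp only [canonicalPairing_apply, add_comm]⟩

theorem canonicalPairing_nondegenerate : (canonicalPairing K X).Nondegenerate := by
  refine LinearMap.BilinForm.Nondegenerate.congr _ ?_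
  refine (LinearMap.isSymm_dualProd K X).isRefl.nondegenerate_iff_separatingLeft.mpr ?_
  exact (LinearMap.separatingLeft_dualProd K X).mpr (eval_apply_injective K)

theorem isLagrangian_ker_fst :
    IsLagrangian (canonicalPairing K X) (LinearMap.ker (LinearMap.fst K X (Dual K X))) := by
  ext ⟨x, ξ⟩
  constructor
  · intro h
    refine (Module.forall_dual_apply_eq_zero_iff K x).mp fun η => ?_
    simpa [canonicalPairing_apply] using h (0, η) rfl
  · rintro (rfl : x = 0) ⟨_, η⟩ (rfl : _ = 0)
    simp [canonicalPairing_apply]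

theorem mk_zero_mem_iff_of_isLagrangian {τ : Submodule K (X × Dual K X)}
    (hτ : IsLagrangian (canonicalPairing K X) τ) (ξ : Dual K X) :
    ((0 : X), ξ) ∈ τ ↔ ∀ x ∈ τ.map (LinearMap.fst K X (Dual K X)), ξ x = 0 := by
  conv_lhs => rw [← hτ, LinearMap.BilinForm.mem_orthogonal_iff]
  simp [canonicalPairing_apply]

theorem finrank_prod_dual [FiniteDimensional K X] :
    finrank K (X × Dual K X) = finrank K X + finrank K X := by
  rw [finrank_prod, Subspace.dual_finrank_eq]

end CanonicalPairing

theorem stmt10_general {K X : Type*} [Field K] [AddCommGroup X] [Module K X]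
    [FiniteDimensional K X] (hK : ¬IsSquare (-1 : K)) (J : End K (X × Dual K X))
    (hJ : J * J = -1)
    (horth : (canonicalPairing K X).IsOrthogonal J)
    (S : Submodule K X) (hS : Even (finrank K S))
    (τ : Submodule K (X × Dual K X))
    (hiso : ∀ u ∈ τ, ∀ v ∈ τ, canonicalPairing K X u v = 0)
    (hmax : finrank K τ = finrank K X)
    (hinv : ∀ u ∈ τ, J u ∈ τ)
    (hproj : τ.map (LinearMap.fst K X (Dual K X)) = S) :
    ∃ U : Submodule K (X × Dual K X),
      (∀ u ∈ U, ∀ v ∈ U, canonicalPairing K X u v = 0) ∧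
      (∀ u ∈ U, J u ∈ U) ∧
      IsCompl U (LinearMap.ker (LinearMap.fst K X (Dual K X))) ∧
      (U ⊓ τ) ⊔ (τ ⊓ LinearMap.ker (LinearMap.fst K X (Dual K X))) = τ ∧
      (∀ u ∈ U ⊓ τ, J u ∈ U ⊓ τ) ∧
      (U ⊓ τ).map (LinearMap.fst K X (Dual K X)) = S ∧
      (∀ ξ : Dual K X, ((0 : X), ξ) ∈ τ ↔ ∀ s ∈ S, ξ s = 0) := by
  subst hproj
  have hτ : IsLagrangian (canonicalPairing K X) τ := isLagrangian_of_isotropic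
    canonicalPairing_nondegenerate hiso (by rw [finrank_prod_dual, hmax])
  have heven : Even (finrank K ↥(τ ⊓ LinearMap.ker (LinearMap.fst K X (Dual K X)))) := by
    have hτ_even := even_finrank_of_mem_invtSubmodule hK hJ (T := τ) hinv
    rw [← finrank_map_add_finrank_inf_ker (LinearMap.fst K X (Dual K X)), Nat.even_add] at hτ_even
    exact hτ_even.mp hS
  obtain ⟨U, hUJ, hU, hUcompl, hUτ⟩ := exists_isLagrangian_isCompl_inf_sup_inf_eq hK
    canonicalPairing_nondegenerate canonicalPairing_isSymm hJ
    (isSkewAdjoint_of_isOrthogonal hJ horth) hτ hinv isLagrangian_ker_fst heven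
  exact ⟨U, fun _ hu _ hv => hU.apply_eq_zero hu hv, hUJ, hUcompl, hUτ,
    fun u hu => ⟨hUJ hu.1, hinv u hu.2⟩, map_eq_of_sup_inf_ker_eq hUτ,
    mk_zero_mem_iff_of_isLagrangian hτ⟩

theorem not_isSquare_neg_one_real : ¬IsSquare (-1 : ℝ) := fun h => by
  linarith [h.nonneg]

theorem gpair_eq_canonicalPairing_div_two {X : Type*} [AddCommGroup X] [Module ℝ X]
    (u v : X × Dual ℝ X) : gpair u v = canonicalPairing ℝ X u v / 2 := by
  rw [gpair, canonicalPairing_apply]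

theorem stmt10 (J : (V × Module.Dual ℝ V) →ₗ[ℝ] (V × Module.Dual ℝ V))
    (hI2 : ∀ u, J (J u) = -u)
    (horth : ∀ u v, gpair (J u) (J v) = gpair u v)
    (S : Submodule ℝ V) (hSeven : Even (Module.finrank ℝ S))
    (τ : Submodule ℝ (V × Module.Dual ℝ V))
    (hiso : ∀ u ∈ τ, ∀ v ∈ τ, gpair u v = 0)
    (hmax : Module.finrank ℝ τ = Module.finrank ℝ V)
    (hinv : ∀ u ∈ τ, J u ∈ τ)
    (hproj : Submodule.map (LinearMap.fst ℝ V (Module.Dual ℝ V)) τ = S) :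
    ∃ U : Submodule ℝ (V × Module.Dual ℝ V),
      (∀ u ∈ U, ∀ v ∈ U, gpair u v = 0) ∧
      (∀ u ∈ U, J u ∈ U) ∧
      IsCompl U (dualSub V) ∧
      (U ⊓ τ) ⊔ (τ ⊓ dualSub V) = τ ∧
      (∀ u ∈ U ⊓ τ, J u ∈ U ⊓ τ) ∧
      Submodule.map (LinearMap.fst ℝ V (Module.Dual ℝ V)) (U ⊓ τ) = S ∧
      (∀ ξ : Module.Dual ℝ V, ((0 : V), ξ) ∈ τ ↔ ∀ s ∈ S, ξ s = 0) := by
  simp only [gpair_eq_canonicalPairing_div_two, div_left_inj' (two_ne_zero' ℝ), div_eq_zero_iff,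
    two_ne_zero, or_false] at horth hiso ⊢
  exact stmt10_general not_isSquare_neg_one_real J (LinearMap.ext hI2) horth S hSeven τ hiso hmax
    hinv hproj
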